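/- The entrywise assignment L^± ↦ (L^±)^{−1}, i.e. sending each generator l^±_{ij} of U_q(gl_n) to the (i,j) entry of the inverse of the generator matrix L^± of U_{q^{−1}}(gl_n), defines an algebra isomorphism from U_q(gl_n) onto U_{q^{−1}}(gl_n). -/

import Mathlib

open Matrix

noncomputable section

/-- The `R`-matrix of `U_q(gl_n)` as an `n²×n²` matrix. -/
def Rmat (q : ℂ) (n : ℕ) : Matrix (Fin n × Fin n) (Fin n × Fin n) ℂ :=
  fun p r =>
    (if p = r then (if p.1 = p.2 then q else 1) else 0) +
      (if r.1 = p.2 ∧ r.2 = p.1 ∧ p.1 < p.2 then q - q⁻¹ else 0)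

/-- Generators of `U_q(gl_n)`: a sign (`true` for `+`) and a pair of indices. -/
abbrev GenGL (n : ℕ) := Bool × Fin n × Fin n

/-- The generator `l^±_{ij}` in the free algebra. -/
def gl (n : ℕ) (p : Bool) (i j : Fin n) : FreeAlgebra ℂ (GenGL n) :=
  FreeAlgebra.ι ℂ (p, i, j)

/-- Embedding of an `n×n` matrix into the first tensor leg of `End(ℂ^n)⊗End(ℂ^n)`. -/
def leg1 {n : ℕ} {A : Type*} [Semiring A] (m : Fin n → Fin n → A) :
    Matrix (Fin n × Fin n) (Fin n × Fin n) A :=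
  fun v w => if v.2 = w.2 then m v.1 w.1 else 0

/-- Embedding of an `n×n` matrix into the second tensor leg of `End(ℂ^n)⊗End(ℂ^n)`. -/
def leg2 {n : ℕ} {A : Type*} [Semiring A] (m : Fin n → Fin n → A) :
    Matrix (Fin n × Fin n) (Fin n × Fin n) A :=
  fun v w => if v.1 = w.1 then m v.2 w.2 else 0

/-- The `R`-matrix with entries in the free algebra. -/
def RcGL (q : ℂ) (n : ℕ) : Matrix (Fin n × Fin n) (Fin n × Fin n) (FreeAlgebra ℂ (GenGL n)) :=
  (Rmat q n).map (algebraMap ℂ (FreeAlgebra ℂ (GenGL n)))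

/-- The defining relations of `U_q(gl_n)` in its `RTT` presentation. -/
inductive relGL (q : ℂ) (n : ℕ) :
    FreeAlgebra ℂ (GenGL n) → FreeAlgebra ℂ (GenGL n) → Prop
  | tri_minus {i j : Fin n} : i < j → relGL q n (gl n false i j) 0
  | tri_plus {i j : Fin n} : i < j → relGL q n (gl n true j i) 0
  | diag_mp (i : Fin n) : relGL q n (gl n false i i * gl n true i i) 1
  | diag_pm (i : Fin n) : relGL q n (gl n true i i * gl n false i i) 1
  | rll (p : Bool) (v w : Fin n × Fin n) :
      relGL q n
        ((RcGL q n * leg1 (gl n p) * leg2 (gl n p)) v w)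
        ((leg2 (gl n p) * leg1 (gl n p) * RcGL q n) v w)
  | rll_pm (v w : Fin n × Fin n) :
      relGL q n
        ((RcGL q n * leg1 (gl n true) * leg2 (gl n false)) v w)
        ((leg2 (gl n false) * leg1 (gl n true) * RcGL q n) v w)

/-- The quantized enveloping algebra `U_q(gl_n)` in its `RTT` presentation. -/
abbrev UqGL (q : ℂ) (n : ℕ) := RingQuot (relGL q n)

/-- The generator `l^±_{ij}` of `U_q(gl_n)`. -/
def lG (q : ℂ) (n : ℕ) (p : Bool) (i j : Fin n) : UqGL q n :=
  RingQuot.mkAlgHom ℂ (relGL q n) (gl n p i j)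

/-- The generator matrix `L^± = [l^±_{ij}]`. -/
def LM (q : ℂ) (n : ℕ) (p : Bool) : Matrix (Fin n) (Fin n) (UqGL q n) :=
  fun i j => lG q n p i j

/-- The diagonal matrix `D = diag(q^{n−1}, q^{n−3}, …, q^{−n+1})` over `A`. -/
def Dmat (q : ℂ) (n : ℕ) (A : Type*) [Ring A] [Algebra ℂ A] : Matrix (Fin n) (Fin n) A :=
  Matrix.diagonal fun i => algebraMap ℂ A (q ^ ((n : ℤ) - 1 - 2 * (i : ℤ)))

/-- The inverse diagonal matrix `D⁻¹`. -/
def Dmatinv (q : ℂ) (n : ℕ) (A : Type*) [Ring A] [Algebra ℂ A] : Matrix (Fin n) (Fin n) A :=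
  Matrix.diagonal fun i => algebraMap ℂ A (q ^ (-((n : ℤ) - 1 - 2 * (i : ℤ))))

/-- Quantum trace `tr_q X = tr(D X)`. -/
def trq {n : ℕ} {A : Type*} [Ring A] [Algebra ℂ A] (q : ℂ) (X : Matrix (Fin n) (Fin n) A) : A :=
  Matrix.trace (Dmat q n A * X)

/-- The `q`-number `[k]_q`. -/
def qint (q : ℂ) (k : ℤ) : ℂ := (q ^ k - q ^ (-k)) / (q - q⁻¹)

end

lemma Rmat_mul_apply {n : ℕ} (q : ℂ) (M : Matrix (Fin n × Fin n) (Fin n × Fin n) ℂ)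
    (p r : Fin n × Fin n) :
    (Rmat q n * M) p r = (if p.1 = p.2 then q else 1) * M p r +
      (if p.1 < p.2 then (q - q⁻¹) * M (p.2, p.1) r else 0) := by
  rw [Matrix.mul_apply]
  simp only [Rmat, add_mul, Finset.sum_add_distrib]
  congr 1
  · simp
  · rw [Finset.sum_eq_single (p.2, p.1)]
    · simp
    · rintro ⟨a, b⟩ - h
      rw [if_neg, zero_mul]
      rintro ⟨h1, h2, -⟩
      exact h (Prod.ext h1 h2)
    · simp

lemma Rmat_mul_Rmat {n : ℕ} {q q' : ℂ} (h : q * q' = 1) : Rmat q n * Rmat q' n = 1 := by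
  have hq0 : q ≠ 0 := left_ne_zero_of_mul_eq_one h
  obtain rfl : q' = q⁻¹ := eq_inv_of_mul_eq_one_right h
  ext ⟨a, b⟩ ⟨c, d⟩
  rw [Rmat_mul_apply]
  simp only [Rmat, Matrix.one_apply, Prod.mk.injEq, inv_inv]
  rcases lt_trichotomy a b with hab | hab | hab
  · have h1 : ¬ b < a := not_lt.mpr hab.le
    have h2 : a ≠ b := hab.ne
    have h3 : b ≠ a := hab.ne'
    by_cases hc : a = c ∧ b = d
    · obtain ⟨rfl, rfl⟩ := hc
      simp [hab, h1, h2, h3]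
    · by_cases hd : b = c ∧ a = d
      · obtain ⟨rfl, rfl⟩ := hd
        simp [hab, h1, h2, h3]
      · have : ¬ (c = b ∧ d = a) := fun h => hd ⟨h.1.symm, h.2.symm⟩
        simp [hab, h1, h2, hc, hd]
        tauto
  · subst hab
    by_cases hc : a = c ∧ a = d
    · obtain ⟨rfl, rfl⟩ := hc
      simp [hq0]
    · simp [hc]
  · have h1 : ¬ a < b := not_lt.mpr hab.le
    have h2 : a ≠ b := hab.ne'
    simp [h1, h2]

lemma leg1_eq {n : ℕ} {A : Type*} [Semiring A] (X Y : Matrix (Fin n) (Fin n) A) :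
    leg1 X * leg1 Y = leg1 (X * Y) := by
  ext ⟨a, b⟩ ⟨c, d⟩
  simp only [leg1, Matrix.mul_apply, Fintype.sum_prod_type]
  by_cases h : b = d
  · subst h; simp
  · simp only [h, if_false]
    refine Finset.sum_eq_zero fun x _ => Finset.sum_eq_zero fun y _ => ?_
    by_cases h1 : b = y
    · subst h1; simp [h]
    · simp [h1]

lemma leg2_eq {n : ℕ} {A : Type*} [Semiring A] (X Y : Matrix (Fin n) (Fin n) A) :
    leg2 X * leg2 Y = leg2 (X * Y) := by
  ext ⟨a, b⟩ ⟨c, d⟩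
  simp only [leg2, Matrix.mul_apply, Fintype.sum_prod_type_right]
  by_cases h : a = c
  · subst h; simp
  · simp only [h, if_false]
    refine Finset.sum_eq_zero fun x _ => Finset.sum_eq_zero fun y _ => ?_
    by_cases h1 : a = y
    · subst h1; simp [h]
    · simp [h1]

lemma leg1_one {n : ℕ} {A : Type*} [Semiring A] :
    leg1 (1 : Matrix (Fin n) (Fin n) A) = 1 := by
  ext ⟨a, b⟩ ⟨c, d⟩
  simp only [leg1, Matrix.one_apply, Prod.mk.injEq]
  by_cases h : b = d <;> by_cases h' : a = c <;> simp [h, h']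

lemma leg2_one {n : ℕ} {A : Type*} [Semiring A] :
    leg2 (1 : Matrix (Fin n) (Fin n) A) = 1 := by
  ext ⟨a, b⟩ ⟨c, d⟩
  simp only [leg2, Matrix.one_apply, Prod.mk.injEq]
  by_cases h : b = d <;> by_cases h' : a = c <;> simp [h, h']

lemma leg1_map {n : ℕ} {A B : Type*} [Semiring A] [Semiring B] (g : A →+* B)
    (X : Matrix (Fin n) (Fin n) A) : (leg1 X).map g = leg1 (X.map g) := by
  ext ⟨a, b⟩ ⟨c, d⟩
  simp only [leg1, Matrix.map_apply]
  split_ifs <;> simp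

lemma leg2_map {n : ℕ} {A B : Type*} [Semiring A] [Semiring B] (g : A →+* B)
    (X : Matrix (Fin n) (Fin n) A) : (leg2 X).map g = leg2 (X.map g) := by
  ext ⟨a, b⟩ ⟨c, d⟩
  simp only [leg2, Matrix.map_apply]
  split_ifs <;> simp

/-- The `R`-matrix over an algebra. -/
noncomputable def RA (q : ℂ) (n : ℕ) (A : Type*) [Semiring A] [Algebra ℂ A] :
    Matrix (Fin n × Fin n) (Fin n × Fin n) A := (Rmat q n).map (algebraMap ℂ A)

lemma RA_mul {n : ℕ} {q q' : ℂ} (A : Type*) [Semiring A] [Algebra ℂ A] (h : q * q' = 1) :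
    RA q n A * RA q' n A = 1 := by
  rw [RA, RA, ← Matrix.map_mul, Rmat_mul_Rmat h]
  simp

lemma RA_map {n : ℕ} {q : ℂ} {A B : Type*} [Semiring A] [Algebra ℂ A] [Semiring B] [Algebra ℂ B]
    (g : A →ₐ[ℂ] B) : (RA q n A).map (g : A →+* B) = RA q n B := by
  ext a b
  simp [RA]

/-- Inverting an `RLL` relation. -/
lemma rll_inv {n : ℕ} {q q' : ℂ} {A : Type*} [Ring A] [Algebra ℂ A] (h : q * q' = 1)
    {X Y X' Y' : Matrix (Fin n) (Fin n) A} (hX : X * X' = 1) (hX' : X' * X = 1)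
    (hY : Y * Y' = 1) (hY' : Y' * Y = 1)
    (H : RA q' n A * leg1 X * leg2 Y = leg2 Y * leg1 X * RA q' n A) :
    RA q n A * leg1 X' * leg2 Y' = leg2 Y' * leg1 X' * RA q n A := by
  have h1 := RA_mul (n := n) A h
  have h2 := RA_mul (n := n) A ((mul_comm q' q).trans h)
  have x1 : leg1 X * leg1 X' = 1 := by rw [leg1_eq, hX, leg1_one]
  have x2 : leg1 X' * leg1 X = 1 := by rw [leg1_eq, hX', leg1_one]
  have y1 : leg2 Y * leg2 Y' = 1 := by rw [leg2_eq, hY, leg2_one]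
  have y2 : leg2 Y' * leg2 Y = 1 := by rw [leg2_eq, hY', leg2_one]
  have a1 : (RA q' n A * leg1 X * leg2 Y) * (leg2 Y' * leg1 X' * RA q n A) = 1 := by
    calc _ = RA q' n A * (leg1 X * (leg2 Y * leg2 Y') * leg1 X') * RA q n A := by
          simp only [mul_assoc]
      _ = 1 := by rw [y1, mul_one, x1, mul_one, h2]
  have a2 : (RA q n A * leg1 X' * leg2 Y') * (leg2 Y * leg1 X * RA q' n A) = 1 := by
    calc _ = RA q n A * (leg1 X' * (leg2 Y' * leg2 Y) * leg1 X) * RA q' n A := by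
          simp only [mul_assoc]
      _ = 1 := by rw [y2, mul_one, x2, mul_one, h1]
  rw [← H] at a2
  exact left_inv_eq_right_inv a2 a1

lemma strict_pow {n : ℕ} {A : Type*} [Ring A] (f : Fin n → ℕ)
    (N : Matrix (Fin n) (Fin n) A) (hN : ∀ i j, f j ≤ f i → N i j = 0) (k : ℕ) :
    ∀ i j, f j < f i + k → (N ^ k) i j = 0 := by
  induction k with
  | zero =>
    intro i j h
    rw [pow_zero, Matrix.one_apply, if_neg]
    rintro rfl
    omega
  | succ k ih =>
    intro i j h
    rw [pow_succ, Matrix.mul_apply]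
    refine Finset.sum_eq_zero fun x _ => ?_
    by_cases hx : f x < f i + k
    · rw [ih i x hx, zero_mul]
    · rw [hN x j (by omega), mul_zero]

/-- Triangular matrices with invertible diagonal are invertible. -/
lemma tri_inv {n : ℕ} {A : Type*} [Ring A] (f : Fin n → ℕ) (hf : Function.Injective f)
    (hfn : ∀ i, f i < n)
    (T : Matrix (Fin n) (Fin n) A) (hT : ∀ i j, f j < f i → T i j = 0)
    (d : Fin n → A) (hd : ∀ i, T i i * d i = 1) (hd' : ∀ i, d i * T i i = 1) :
    ∃ M : Matrix (Fin n) (Fin n) A, T * M = 1 ∧ M * T = 1 ∧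
      (∀ i j, f j < f i → M i j = 0) ∧ ∀ i, M i i = d i := by
  have hDu : IsUnit (Matrix.diagonal fun i => T i i) := by
    refine ⟨⟨Matrix.diagonal fun i => T i i, Matrix.diagonal d, ?_, ?_⟩, rfl⟩ <;>
      simp [Matrix.diagonal_mul_diagonal, hd, hd']
  have hnil : IsNilpotent (Matrix.diagonal d * T - 1) := by
    refine ⟨n, ?_⟩
    ext i j
    refine strict_pow f _ ?_ n i j (by have := hfn j; omega)
    intro i j hij
    rw [Matrix.sub_apply, Matrix.diagonal_mul, Matrix.one_apply]
    rcases hij.lt_or_eq with h | h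
    · rw [hT i j h, if_neg (by rintro rfl; omega)]; simp
    · obtain rfl := hf h
      simp [hd']
  have hu : IsUnit T := by
    have h1 := hDu.mul hnil.isUnit_one_add
    have : (Matrix.diagonal fun i => T i i) * (1 + (Matrix.diagonal d * T - 1)) = T := by
      rw [add_sub_cancel, ← mul_assoc, Matrix.diagonal_mul_diagonal]
      simp [hd]
    rwa [this] at h1
  obtain ⟨M, hTM, hMT⟩ := isUnit_iff_exists.mp hu
  have tri : ∀ m : ℕ, ∀ i j, f j = m → f j < f i → M i j = 0 := by
    intro m
    induction m using Nat.strong_induction_on with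
    | _ m ih =>
      intro i j hm hij
      have h := congrFun (congrFun hMT i) j
      rw [Matrix.mul_apply, Finset.sum_eq_single j, Matrix.one_apply,
        if_neg (by rintro rfl; omega)] at h
      · have := congrArg (· * d j) h
        simpa [mul_assoc, hd] using this
      · intro x _ hx
        rcases lt_trichotomy (f x) (f j) with h1 | h1 | h1
        · rw [ih (f x) (by omega) i x rfl (by omega), zero_mul]
        · exact absurd (hf h1) hx
        · rw [hT x j h1, mul_zero]
      · simp
  refine ⟨M, hTM, hMT, fun i j => tri _ i j rfl, fun i => ?_⟩
  have h := congrFun (congrFun hMT i) i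
  rw [Matrix.mul_apply, Finset.sum_eq_single i, Matrix.one_apply, if_pos rfl] at h
  · have := congrArg (· * d i) h
    simpa [mul_assoc, hd] using this
  · intro x _ hx
    rcases lt_trichotomy (f x) (f i) with h1 | h1 | h1
    · rw [tri _ i x rfl h1, zero_mul]
    · exact absurd (hf h1) hx
    · rw [hT x i h1, mul_zero]
  · simp

lemma LM_rel {q : ℂ} {n : ℕ} (p s : Bool)
    (H : ∀ v w, relGL q n
        ((RcGL q n * leg1 (gl n p) * leg2 (gl n s)) v w)
        ((leg2 (gl n s) * leg1 (gl n p) * RcGL q n) v w)) :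
    RA q n (UqGL q n) * leg1 (LM q n p) * leg2 (LM q n s) =
      leg2 (LM q n s) * leg1 (LM q n p) * RA q n (UqGL q n) := by
  have key : (RcGL q n * leg1 (gl n p) * leg2 (gl n s)).map
        (RingQuot.mkAlgHom ℂ (relGL q n) : _ →+* UqGL q n) =
      (leg2 (gl n s) * leg1 (gl n p) * RcGL q n).map
        (RingQuot.mkAlgHom ℂ (relGL q n) : _ →+* UqGL q n) := by
    ext v w
    exact RingQuot.mkAlgHom_rel ℂ (H v w)
  rw [Matrix.map_mul, Matrix.map_mul, Matrix.map_mul, Matrix.map_mul] at key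
  erw [leg1_map, leg2_map, RA_map] at key
  exact key

lemma rel_of_matrix {q : ℂ} {n : ℕ} {A : Type*} [Ring A] [Algebra ℂ A]
    (g : FreeAlgebra ℂ (GenGL n) →ₐ[ℂ] A) (p s : Bool) (X Y : Matrix (Fin n) (Fin n) A)
    (hX : ∀ i j, g (gl n p i j) = X i j) (hY : ∀ i j, g (gl n s i j) = Y i j)
    (H : RA q n A * leg1 X * leg2 Y = leg2 Y * leg1 X * RA q n A) (v w : Fin n × Fin n) :
    g ((RcGL q n * leg1 (gl n p) * leg2 (gl n s)) v w) =
      g ((leg2 (gl n s) * leg1 (gl n p) * RcGL q n) v w) := by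
  have eX : Matrix.map (gl n p) (g : _ →+* A) = X := by ext i j; exact hX i j
  have eY : Matrix.map (gl n s) (g : _ →+* A) = Y := by ext i j; exact hY i j
  have key : (RcGL q n * leg1 (gl n p) * leg2 (gl n s)).map (g : _ →+* A) =
      (leg2 (gl n s) * leg1 (gl n p) * RcGL q n).map (g : _ →+* A) := by
    rw [Matrix.map_mul, Matrix.map_mul, Matrix.map_mul, Matrix.map_mul]
    erw [leg1_map, leg2_map, RA_map, eX, eY]
    exact H
  exact congrFun (congrFun key v) w

/-- The inverses of the generator matrices. -/
lemma exists_inv (q : ℂ) (n : ℕ) : ∃ M : Bool → Matrix (Fin n) (Fin n) (UqGL q n),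
    (∀ p, LM q n p * M p = 1) ∧ (∀ p, M p * LM q n p = 1) ∧
    (∀ i j, i < j → M false i j = 0) ∧ (∀ i j, i < j → M true j i = 0) ∧
    (∀ p i, M p i i = LM q n (!p) i i) := by
  have dmp : ∀ i, LM q n false i i * LM q n true i i = 1 := fun i => by
    have := RingQuot.mkAlgHom_rel ℂ (relGL.diag_mp (q := q) i)
    rwa [map_mul, map_one] at this
  have dpm : ∀ i, LM q n true i i * LM q n false i i = 1 := fun i => by
    have := RingQuot.mkAlgHom_rel ℂ (relGL.diag_pm (q := q) i)
    rwa [map_mul, map_one] at this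
  have tm : ∀ i j, i < j → LM q n false i j = 0 := fun i j h => by
    have := RingQuot.mkAlgHom_rel ℂ (relGL.tri_minus (q := q) h)
    rwa [map_zero] at this
  have tp : ∀ i j, i < j → LM q n true j i = 0 := fun i j h => by
    have := RingQuot.mkAlgHom_rel ℂ (relGL.tri_plus (q := q) h)
    rwa [map_zero] at this
  obtain ⟨P, p1, p2, p3, p4⟩ := tri_inv (fun i : Fin n => (i : ℕ)) Fin.val_injective
    (fun i => i.2) (LM q n true) (fun i j h => tp j i h) (fun i => LM q n false i i) dpm dmp
  obtain ⟨N, n1, n2, n3, n4⟩ := tri_inv (fun i : Fin n => n - 1 - (i : ℕ))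
    (fun a b h => by ext; simp only at h; omega) (fun i => by omega) (LM q n false)
    (fun i j h => tm i j (by rw [Fin.lt_def]; omega))
    (fun i => LM q n true i i) dmp dpm
  refine ⟨fun p => if p then P else N, ?_, ?_, ?_, ?_, ?_⟩
  · rintro (_ | _) <;> simpa
  · rintro (_ | _) <;> simpa
  · intro i j h
    exact n3 i j (by rw [Fin.lt_def] at h; omega)
  · intro i j h
    exact p3 j i h
  · rintro (_ | _) i
    · exact n4 i
    · exact p4 i

/-- The homomorphism `L ↦ L⁻¹`. -/
lemma exists_hom (n : ℕ) {q q' : ℂ} (h : q * q' = 1) :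
    ∃ φ : UqGL q n →ₐ[ℂ] UqGL q' n, ∀ p,
      LM q' n p * (LM q n p).map φ = 1 ∧ (LM q n p).map φ * LM q' n p = 1 := by
  obtain ⟨M, m1, m2, m3, m4, m5⟩ := exists_inv q' n
  have dmp : ∀ i, LM q' n false i i * LM q' n true i i = 1 := fun i => by
    have := RingQuot.mkAlgHom_rel ℂ (relGL.diag_mp (q := q') i)
    rwa [map_mul, map_one] at this
  have dpm : ∀ i, LM q' n true i i * LM q' n false i i = 1 := fun i => by
    have := RingQuot.mkAlgHom_rel ℂ (relGL.diag_pm (q := q') i)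
    rwa [map_mul, map_one] at this
  let g : FreeAlgebra ℂ (GenGL n) →ₐ[ℂ] UqGL q' n :=
    FreeAlgebra.lift ℂ fun x : GenGL n => M x.1 x.2.1 x.2.2
  have hg : ∀ p i j, g (gl n p i j) = M p i j := fun p i j => by simp [g, gl]
  have hrel : ∀ ⦃x y⦄, relGL q n x y → g x = g y := by
    intro x y hxy
    induction hxy with
    | tri_minus hij => rw [hg, map_zero, m3 _ _ hij]
    | tri_plus hij => rw [hg, map_zero, m4 _ _ hij]
    | diag_mp i => rw [map_mul, map_one, hg, hg, m5, m5]; exact dpm i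
    | diag_pm i => rw [map_mul, map_one, hg, hg, m5, m5]; exact dmp i
    | rll p v w =>
      exact rel_of_matrix g p p (M p) (M p) (hg p) (hg p)
        (rll_inv h (m1 p) (m2 p) (m1 p) (m2 p) (LM_rel p p (relGL.rll p))) v w
    | rll_pm v w =>
      exact rel_of_matrix g true false (M true) (M false) (hg _) (hg _)
        (rll_inv h (m1 _) (m2 _) (m1 _) (m2 _) (LM_rel true false relGL.rll_pm)) v w
  refine ⟨RingQuot.liftAlgHom ℂ ⟨g, hrel⟩, fun p => ?_⟩
  have : (LM q n p).map (RingQuot.liftAlgHom ℂ ⟨g, hrel⟩ : UqGL q n →ₐ[ℂ] UqGL q' n) = M p := by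
    ext i j
    rw [Matrix.map_apply, LM, lG, RingQuot.liftAlgHom_mkAlgHom_apply, hg]
  rw [this]
  exact ⟨m1 p, m2 p⟩

lemma comp_id (n : ℕ) {q q' : ℂ} (φ : UqGL q n →ₐ[ℂ] UqGL q' n) (ψ : UqGL q' n →ₐ[ℂ] UqGL q n)
    (hφ : ∀ p, LM q' n p * (LM q n p).map φ = 1)
    (hψ : ∀ p, (LM q' n p).map ψ * LM q n p = 1 ∧ LM q n p * (LM q' n p).map ψ = 1) :
    ψ.comp φ = AlgHom.id ℂ _ := by
  apply RingQuot.ringQuot_ext'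
  apply FreeAlgebra.hom_ext
  funext x
  obtain ⟨p, i, j⟩ := x
  have h1 : (LM q' n p).map ψ * ((LM q n p).map φ).map ψ = 1 := by
    rw [← Matrix.map_mul, hφ]
    simp
  have h2 : LM q n p = ((LM q n p).map φ).map ψ := left_inv_eq_right_inv (hψ p).2 h1
  exact (congrFun (congrFun h2 i) j).symm

/-- The assignment `L^± ↦ (L^±)⁻¹` (entrywise on the generator matrices)
defines an algebra isomorphism `U_q(gl_n) → U_{q⁻¹}(gl_n)`. -/
theorem stmt_16 (n : ℕ) (hn : 1 ≤ n) (q : ℂ) (hq0 : q ≠ 0)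
    (hq : ∀ k : ℕ, k ≠ 0 → q ^ k ≠ 1) :
    ∃ φ : UqGL q n ≃ₐ[ℂ] UqGL q⁻¹ n,
      ∀ Lpinv Lminv : Matrix (Fin n) (Fin n) (UqGL q⁻¹ n),
        LM q⁻¹ n true * Lpinv = 1 → Lpinv * LM q⁻¹ n true = 1 →
        LM q⁻¹ n false * Lminv = 1 → Lminv * LM q⁻¹ n false = 1 →
        ∀ i j : Fin n,
          φ (lG q n true i j) = Lpinv i j ∧ φ (lG q n false i j) = Lminv i j := by
  have h : q * q⁻¹ = 1 := mul_inv_cancel₀ hq0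
  obtain ⟨φ, hφ⟩ := exists_hom n h
  obtain ⟨ψ, hψ⟩ := exists_hom n ((mul_comm q⁻¹ q).trans h)
  refine ⟨AlgEquiv.ofAlgHom φ ψ
    (comp_id n ψ φ (fun p => (hψ p).1) fun p => ⟨(hφ p).2, (hφ p).1⟩)
    (comp_id n φ ψ (fun p => (hφ p).1) fun p => ⟨(hψ p).2, (hψ p).1⟩), ?_⟩
  intro Lp Lm h1 h2 h3 h4 i j
  have e1 : (LM q n true).map φ = Lp := left_inv_eq_right_inv (hφ true).2 h1
  have e2 : (LM q n false).map φ = Lm := left_inv_eq_right_inv (hφ false).2 h3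
  exact ⟨congrFun (congrFun e1 i) j, congrFun (congrFun e2 i) j⟩
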